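/- Let n ≥ 1, c_u ∈ (0,1), C_u ∈ (1,∞), and let U ⊊ ℝⁿ be a (c_u,C_u)-uniform domain. Then there exist constants a₀ ∈ (0,1) and A₀, A₁ ∈ (1,∞), depending only on n, c_u and C_u, with the following property: for every boundary point ξ ∈ ∂U, every radius r with 0 < r < a₀·diam(U) (every r > 0 if U is unbounded), and every pair of functions u, v that are positive and harmonic on U ∩ B(ξ, A₀r), continuous on the closure of U ∩ B(ξ, A₀r), and identically 0 on ∂U ∩ B(ξ, A₀r), one has u(x)·v(x′) ≤ A₁·u(x′)·v(x) for all x, x′ ∈ U ∩ B(ξ, r). -/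

import Mathlib

open Set Metric MeasureTheory ENNReal

noncomputable section

abbrev En (n : ℕ) := EuclideanSpace ℝ (Fin n)

/-- The length of the curve `γ : [0,1] → X`, defined as the supremum of sums
`∑ d(γ(t_i), γ(t_{i-1}))` over partitions `0 ≤ t₀ < … < t_k ≤ 1`. -/
def curveLength {X : Type*} [PseudoEMetricSpace X] (γ : ℝ → X) : ℝ≥0∞ :=
  eVariationOn γ (Set.Icc 0 1)

/-- `γ` is a continuous curve in `Ω` from `x` to `y`. -/
def IsCurveIn {X : Type*} [PseudoEMetricSpace X] (Ω : Set X) (x y : X) (γ : ℝ → X) : Prop :=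
  ContinuousOn γ (Set.Icc 0 1) ∧ Set.MapsTo γ (Set.Icc 0 1) Ω ∧ γ 0 = x ∧ γ 1 = y

/-- The inner (pseudo)metric of `Ω`: the infimum of lengths of continuous curves
joining `x` to `y` inside `Ω`. -/
def innerDist {X : Type*} [PseudoEMetricSpace X] (Ω : Set X) (x y : X) : ℝ≥0∞ :=
  ⨅ (γ : ℝ → X) (_ : IsCurveIn Ω x y γ), curveLength γ

/-- `U` is a `(c,C)`-uniform domain in `ℝⁿ`. -/
def IsUniformDomain {n : ℕ} (c C : ℝ) (U : Set (En n)) : Prop :=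
  IsOpen U ∧ IsConnected U ∧
    ∀ x ∈ U, ∀ y ∈ U, ∃ γ : ℝ → En n, IsCurveIn U x y γ ∧
      curveLength γ ≤ ENNReal.ofReal (C * dist x y) ∧
      ∀ t ∈ Set.Icc (0:ℝ) 1,
        c * min (dist x (γ t)) (dist (γ t) y) ≤ Metric.infDist (γ t) (frontier U)

/-- The Laplacian `∑ ∂²f/∂xᵢ²` of `f : ℝⁿ → ℝ`. -/
def lap {n : ℕ} (f : En n → ℝ) (x : En n) : ℝ :=
  ∑ i : Fin n,
    fderiv ℝ (fun y => fderiv ℝ f y (EuclideanSpace.single i 1)) x (EuclideanSpace.single i 1)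

/-- `f` is harmonic on the open set `V`: twice continuously differentiable with
vanishing Laplacian. -/
def IsHarmonicOn {n : ℕ} (f : En n → ℝ) (V : Set (En n)) : Prop :=
  ContDiffOn ℝ 2 f V ∧ ∀ x ∈ V, lap f x = 0


lemma second_deriv_nonpos_of_isLocalMax {f f' : ℝ → ℝ} {a : ℝ}
    (hmax : IsLocalMax f 0) (hf : ∀ᶠ t in nhds (0:ℝ), HasDerivAt f (f' t) t)
    (hf' : HasDerivAt f' a 0) : a ≤ 0 := by
  by_contra h
  push Not at h
  have e1 : deriv f =ᶠ[nhds 0] f' := hf.mono fun t ht => ht.deriv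
  have e2 : deriv (deriv f) 0 = a := by rw [e1.deriv_eq]; exact hf'.deriv
  have h0 : deriv f 0 = 0 := hmax.deriv_eq_zero
  have hmin : IsLocalMin f 0 := isLocalMin_of_deriv_deriv_pos (by rw [e2]; exact h) h0
    hf.self_of_nhds.continuousAt
  have hconst : f =ᶠ[nhds 0] fun _ => f 0 := by
    filter_upwards [hmax, hmin] with t h1 h2 using le_antisymm h1 h2
  have h3 : deriv f =ᶠ[nhds 0] fun _ => 0 := by
    have := hconst.deriv
    simpa using this
  have h4 : deriv (deriv f) 0 = 0 := by rw [h3.deriv_eq]; simp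
  linarith

/-- The unit coordinate vector. -/
abbrev ev {n : ℕ} (i : Fin n) : En n := EuclideanSpace.single i (1:ℝ)

lemma hasDerivAt_line {n : ℕ} {f : En n → ℝ} (p : En n) (i : Fin n) (t : ℝ)
    (hf : DifferentiableAt ℝ f (p + t • ev i)) :
    HasDerivAt (fun s : ℝ => f (p + s • ev i)) (fderiv ℝ f (p + t • ev i) (ev i)) t := by
  have h1 : HasDerivAt (fun s : ℝ => p + s • ev i) (ev i) t := by
    simpa using ((hasDerivAt_id t).smul_const (ev i)).const_add p
  exact hf.hasFDerivAt.comp_hasDerivAt t h1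

lemma differentiableAt_partial {n : ℕ} {f : En n → ℝ} {p : En n} (hf : ContDiffAt ℝ 2 f p)
    (i : Fin n) : DifferentiableAt ℝ (fun y => fderiv ℝ f y (ev i)) p := by
  have : ContDiffAt ℝ 1 (fderiv ℝ f) p := hf.fderiv_right (by norm_num)
  exact (this.differentiableAt (by norm_num)).clm_apply (differentiableAt_const _)

lemma lap_nonpos_of_max {n : ℕ} {w : En n → ℝ} {p : En n} (hw : ContDiffAt ℝ 2 w p)
    (b b' : Fin n → ℝ → ℝ) (b'' : Fin n → ℝ)
    (hb : ∀ i t, HasDerivAt (b i) (b' i t) t) (hb' : ∀ i, HasDerivAt (b' i) (b'' i) 0)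
    (hmax : ∀ i, IsLocalMax (fun t : ℝ => w (p + t • ev i) + b i t) 0) :
    lap w p + ∑ i, b'' i ≤ 0 := by
  unfold lap
  rw [← Finset.sum_add_distrib]
  apply Finset.sum_nonpos
  intro i _
  have hd : ∀ᶠ y in nhds p, DifferentiableAt ℝ w y := by
    have := hw.eventually (by simp)
    exact this.mono fun y hy => hy.differentiableAt (by norm_num)
  have hc : Filter.Tendsto (fun t : ℝ => p + t • ev i) (nhds 0) (nhds p) := by
    have : Continuous (fun t : ℝ => p + t • ev i) := by fun_prop
    simpa using this.tendsto 0
  refine second_deriv_nonpos_of_isLocalMax (f' := fun t =>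
    fderiv ℝ w (p + t • ev i) (ev i) + b' i t) (hmax i) ?_ ?_
  · filter_upwards [hc.eventually hd] with t ht
    exact (hasDerivAt_line p i t ht).add (hb i t)
  · have := hasDerivAt_line (f := fun y => fderiv ℝ w y (ev i)) p i 0
      (by simpa using differentiableAt_partial hw i)
    simp only [zero_smul, add_zero] at this
    exact this.add (hb' i)

lemma contDiffAt_of_harm {n : ℕ} {f : En n → ℝ} {V : Set (En n)} (hV : IsOpen V)
    (hf : IsHarmonicOn f V) {x : En n} (hx : x ∈ V) : ContDiffAt ℝ 2 f x :=
  (hf.1 x hx).contDiffAt (hV.mem_nhds hx)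

lemma lap_comb {n : ℕ} {f g : En n → ℝ} {p : En n} (hf : ContDiffAt ℝ 2 f p)
    (hg : ContDiffAt ℝ 2 g p) (a b k : ℝ) :
    lap (fun x => a * f x + b * g x + k) p = a * lap f p + b * lap g p := by
  unfold lap
  rw [Finset.mul_sum, Finset.mul_sum, ← Finset.sum_add_distrib]
  apply Finset.sum_congr rfl
  intro i _
  have hd : ∀ᶠ y in nhds p, fderiv ℝ (fun x => a * f x + b * g x + k) y (ev i)
      = a * fderiv ℝ f y (ev i) + b * fderiv ℝ g y (ev i) := by
    filter_upwards [hf.eventually (by simp), hg.eventually (by simp)] with y h1 h2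
    have d1 := (h1.differentiableAt (by norm_num)).hasFDerivAt
    have d2 := (h2.differentiableAt (by norm_num)).hasFDerivAt
    have := ((d1.const_mul a).add (d2.const_mul b)).add_const k
    have h3 : fderiv ℝ (fun x => a * f x + b * g x + k) y = a • fderiv ℝ f y + b • fderiv ℝ g y :=
      this.fderiv
    rw [h3]
    simp
  have d1 := (differentiableAt_partial hf i).hasFDerivAt
  have d2 := (differentiableAt_partial hg i).hasFDerivAt
  have := ((d1.const_mul a).add (d2.const_mul b)).congr_of_eventuallyEq hd
  rw [this.fderiv]
  simp

lemma harm_comb {n : ℕ} {f g : En n → ℝ} {V : Set (En n)} (hV : IsOpen V)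
    (hf : IsHarmonicOn f V) (hg : IsHarmonicOn g V) (a b k : ℝ) :
    IsHarmonicOn (fun x => a * f x + b * g x + k) V := by
  refine ⟨((contDiffOn_const.mul hf.1).add (contDiffOn_const.mul hg.1)).add contDiffOn_const, ?_⟩
  intro x hx
  rw [lap_comb (contDiffAt_of_harm hV hf hx) (contDiffAt_of_harm hV hg hx), hf.2 x hx, hg.2 x hx]
  simp

lemma normsq_line {n : ℕ} (q : En n) (i : Fin n) (t : ℝ) :
    ‖q + t • ev i‖ ^ 2 = ‖q‖ ^ 2 + 2 * t * q i + t ^ 2 := by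
  rw [norm_add_sq_real, norm_smul, inner_smul_right]
  simp [ev, EuclideanSpace.inner_single_right]
  ring

/-- Growth lemma. -/
lemma growth {n : ℕ} (hn : 1 ≤ n) {U W : Set (En n)} (hU : IsOpen U) (hW : IsOpen W)
    {w : En n → ℝ} (hw : IsHarmonicOn w (U ∩ W)) (hc : ContinuousOn w (closure (U ∩ W)))
    (hbd : ∀ y ∈ frontier U ∩ W, w y ≤ 0) {z : En n} {R s S : ℝ} (hs : 0 < s) (hS : 0 < S)
    (hball : closedBall z R ⊆ W) (hwS : ∀ y ∈ U ∩ closedBall z R, w y ≤ S)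
    (hw0 : ∀ y ∈ U ∩ closedBall z s, y ∈ W → w y ≤ 0) {x : En n} (hx : x ∈ U)
    (hxz : dist x z ≤ R / 2) :
    w x ≤ (1 - (Real.exp (-(n / s ^ 2) * (R / 2) ^ 2) - Real.exp (-(n / s ^ 2) * R ^ 2))) * S := by
  set α : ℝ := n / s ^ 2 with hα
  have hn' : (0:ℝ) < n := by exact_mod_cast hn
  have hαpos : 0 < α := by positivity
  have hR : 0 ≤ R := by linarith [dist_nonneg (x := x) (y := z)]
  set φ : En n → ℝ := fun y => Real.exp (-α * ‖y - z‖ ^ 2) with hφ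
  by_contra hcon
  push Not at hcon
  set e := Real.exp (-α * R ^ 2) with he
  have he0 : 0 < e := Real.exp_pos _
  set g : En n → ℝ := fun y => w y - S * (1 - (φ y - e)) with hg
  have hφc : Continuous φ := by fun_prop
  have hK : IsCompact (closure U ∩ closedBall z R) :=
    (isCompact_closedBall z R).inter_left isClosed_closure
  have hKsub : closure U ∩ closedBall z R ⊆ closure (U ∩ W) := by
    rintro y ⟨h1, h2⟩
    rw [inter_comm]
    exact hW.inter_closure ⟨hball h2, h1⟩
  have hgc : ContinuousOn g (closure U ∩ closedBall z R) := by
    apply (hc.mono hKsub).sub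
    fun_prop
  have hxK : x ∈ closure U ∩ closedBall z R :=
    ⟨subset_closure hx, by rw [mem_closedBall]; linarith⟩
  obtain ⟨p, hpK, hpmax⟩ := hK.exists_isMaxOn ⟨x, hxK⟩ hgc
  have hgx : 0 < g x := by
    have h1 : Real.exp (-α * (R / 2) ^ 2) ≤ φ x := by
      apply Real.exp_le_exp.mpr
      rw [← dist_eq_norm]
      have : dist x z ^ 2 ≤ (R / 2) ^ 2 := by gcongr
      nlinarith
    simp only [hg]
    nlinarith
  have hgp : 0 < g p := lt_of_lt_of_le hgx (hpmax hxK)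
  have hφ1 : φ p ≤ 1 := by
    apply Real.exp_le_one_iff.mpr
    have := mul_nonneg hαpos.le (sq_nonneg ‖p - z‖)
    linarith
  have hpos : 0 < S * (1 - (φ p - e)) := by
    apply mul_pos hS; linarith
  have hpW : p ∈ W := hball hpK.2
  have hpU : p ∈ U := by
    by_contra hpU
    have : p ∈ frontier U := by
      rw [hU.frontier_eq]; exact ⟨hpK.1, hpU⟩
    have := hbd p ⟨this, hpW⟩
    simp only [hg] at hgp
    linarith
  have hps : s < dist p z := by
    by_contra h
    push Not at h
    have := hw0 p ⟨hpU, h⟩ hpW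
    simp only [hg] at hgp
    linarith
  have hpR : dist p z < R := by
    by_contra h
    have h2 : dist p z = R := le_antisymm hpK.2 (not_lt.mp h)
    have h3 : φ p = e := by
      simp only [hφ, he]; rw [← dist_eq_norm, h2]
    have := hwS p ⟨hpU, hpK.2⟩
    simp only [hg, h3] at hgp
    linarith
  -- local maximum
  have hloc : IsLocalMax g p := by
    have : U ∩ ball z R ∈ nhds p := (hU.inter isOpen_ball).mem_nhds ⟨hpU, hpR⟩
    filter_upwards [this] with y hy
    exact hpmax ⟨subset_closure hy.1, ball_subset_closedBall hy.2⟩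
  have hwp := contDiffAt_of_harm (hU.inter hW) hw ⟨hpU, hpW⟩
  set q := p - z with hq
  have key := lap_nonpos_of_max hwp
    (b := fun i t => - (S * (1 - (Real.exp (-α * (‖q‖ ^ 2 + 2 * t * q i + t ^ 2)) - e))))
    (b' := fun i t => S * (Real.exp (-α * (‖q‖ ^ 2 + 2 * t * q i + t ^ 2)) *
      (-α * (2 * q i + 2 * t))))
    (b'' := fun i => S * (Real.exp (-α * ‖q‖ ^ 2) * (4 * α ^ 2 * (q i) ^ 2 - 2 * α)))
    (fun i t => by
      have h1 : HasDerivAt (fun t : ℝ => -α * (‖q‖ ^ 2 + 2 * t * q i + t ^ 2))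
          (-α * (2 * q i + 2 * t)) t := by
        have := ((((hasDerivAt_id t).const_mul 2).mul_const (q i)).const_add (‖q‖ ^ 2)).add
          ((hasDerivAt_id t).pow 2)
        have := this.const_mul (-α)
        exact this.congr_deriv (by simp)
      have := (((h1.exp.sub_const e).const_sub 1).const_mul S).neg
      exact this.congr_deriv (by ring))
    (fun i => by
      have h1 : HasDerivAt (fun t : ℝ => -α * (‖q‖ ^ 2 + 2 * t * q i + t ^ 2))
          (-α * (2 * q i + 2 * 0)) 0 := by
        have := ((((hasDerivAt_id (0:ℝ)).const_mul 2).mul_const (q i)).const_add (‖q‖ ^ 2)).add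
          ((hasDerivAt_id (0:ℝ)).pow 2)
        have := this.const_mul (-α)
        exact this.congr_deriv (by simp)
      have h2 : HasDerivAt (fun t : ℝ => -α * (2 * q i + 2 * t)) (-α * 2) 0 := by
        have := ((((hasDerivAt_id (0:ℝ)).const_mul 2).const_add (2 * q i))).const_mul (-α)
        exact this.congr_deriv (by simp)
      have := (h1.exp.mul h2).const_mul S
      refine this.congr_deriv ?_
      simp
      left
      ring)
    (fun i => by
      have hc : Filter.Tendsto (fun t : ℝ => p + t • ev i) (nhds 0) (nhds p) := by
        have : Continuous (fun t : ℝ => p + t • ev i) := by fun_prop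
        simpa using this.tendsto 0
      have h1 := hc.eventually hloc
      filter_upwards [h1] with t ht
      have e1 : ∀ t : ℝ, φ (p + t • ev i) = Real.exp (-α * (‖q‖ ^ 2 + 2 * t * q i + t ^ 2)) := by
        intro t
        simp only [hφ]
        rw [← normsq_line, hq]
        congr 4
        abel
      have e0 := e1 0
      simp only [hg] at ht
      simp only [zero_smul, add_zero] at e0 ⊢
      rw [e1 t, e0] at ht
      linarith)
  rw [hw.2 p ⟨hpU, hpW⟩, zero_add, ← Finset.mul_sum, ← Finset.mul_sum, Finset.sum_sub_distrib,
    ← Finset.mul_sum] at key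
  have hsum : ∑ i, (q i) ^ 2 = ‖q‖ ^ 2 := by
    rw [EuclideanSpace.norm_sq_eq]; simp
  rw [hsum] at key
  simp only [Finset.sum_const, Finset.card_univ, Fintype.card_fin, nsmul_eq_mul] at key
  have hqs : s ^ 2 < ‖q‖ ^ 2 := by
    rw [hq, ← dist_eq_norm]; gcongr
  have h5 : 0 < 4 * α ^ 2 * ‖q‖ ^ 2 - n * (2 * α) := by
    have h6 : (n:ℝ) = α * s ^ 2 := by rw [hα]; field_simp
    rw [h6]
    have : α ^ 2 * s ^ 2 < α ^ 2 * ‖q‖ ^ 2 := by gcongr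
    have h7 : 0 < α ^ 2 * s ^ 2 := by positivity
    nlinarith
  have := mul_pos hS (mul_pos (Real.exp_pos (-α * ‖q‖ ^ 2)) h5)
  linarith


/-- The radial weight. -/
def wt {n : ℕ} (y : En n) : ℝ := max 0 (1 - ‖y‖ ^ 2)

lemma wt_nonneg {n : ℕ} (y : En n) : 0 ≤ wt y := le_max_left _ _

lemma wt_cont {n : ℕ} : Continuous (wt : En n → ℝ) := by
  unfold wt; fun_prop

lemma wt_eq_zero {n : ℕ} {y : En n} (h : 1 ≤ ‖y‖) : wt y = 0 := by
  unfold wt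
  apply max_eq_left
  nlinarith

lemma wt_compact {n : ℕ} : HasCompactSupport (wt : En n → ℝ) := by
  apply HasCompactSupport.intro (isCompact_closedBall (0 : En n) 1)
  intro y hy
  apply wt_eq_zero
  simp at hy
  exact hy.le

lemma hasDerivAt_maxsq (x : ℝ) : HasDerivAt (fun x : ℝ => (max 0 x) ^ 2) (2 * max 0 x) x := by
  rcases lt_trichotomy x 0 with h | h | h
  · have e : (fun x : ℝ => (max 0 x) ^ 2) =ᶠ[nhds x] fun _ => 0 := by
      filter_upwards [Iio_mem_nhds h] with y hy
      rw [max_eq_left (le_of_lt hy)]; simp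
    rw [max_eq_left h.le]
    simpa using (hasDerivAt_const x (0:ℝ)).congr_of_eventuallyEq e
  · subst h
    rw [hasDerivAt_iff_isLittleO]
    simp only [max_self, mul_zero, smul_zero, sub_zero]
    have h1 : (fun x : ℝ => (max 0 x) ^ 2 - 0 ^ 2) =O[nhds 0] fun x : ℝ => x ^ 2 := by
      apply Asymptotics.IsBigO.of_bound 1
      refine Filter.Eventually.of_forall fun y => ?_
      rw [one_mul, Real.norm_eq_abs, Real.norm_eq_abs]
      have : |max 0 y| ≤ |y| := by
        rcases le_total 0 y with h | h
        · rw [max_eq_right h]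
        · rw [max_eq_left h]; simp
      simpa using sq_le_sq.mpr this
    refine h1.trans_isLittleO ?_
    exact Asymptotics.isLittleO_pow_id (by norm_num)
  · have e : (fun x : ℝ => (max 0 x) ^ 2) =ᶠ[nhds x] fun x => x ^ 2 := by
      filter_upwards [Ioi_mem_nhds h] with y hy
      rw [max_eq_right (le_of_lt hy)]
    rw [max_eq_right h.le]
    have := (hasDerivAt_id x).pow 2
    exact (this.congr_of_eventuallyEq e).congr_deriv (by simp)

/-- Derivative of the squared weight. -/
lemma wt_sq_fderiv {n : ℕ} (y : En n) :
    HasFDerivAt (fun y : En n => wt y ^ 2) ((-4 * wt y) • innerSL ℝ y) y := by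
  have h1 : HasFDerivAt (fun y : En n => 1 - ‖y‖ ^ 2) (-(2 • innerSL ℝ y)) y :=
    ((hasStrictFDerivAt_norm_sq y).hasFDerivAt).const_sub 1
  have := (hasDerivAt_maxsq (1 - ‖y‖ ^ 2)).comp_hasFDerivAt y h1
  refine this.congr_fderiv ?_
  ext v
  simp [wt]
  ring

lemma fderiv_eq_sum {n : ℕ} (L : En n →L[ℝ] ℝ) (y : En n) : L y = ∑ i, y i * L (ev i) := by
  have : y = ∑ i, y i • ev i := by
    ext j
    simp [ev, Finset.sum_apply, Pi.single_apply]
  conv_lhs => rw [this]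
  simp

lemma parts {n : ℕ} {f : En n → ℝ} (hf : ContDiff ℝ 2 f) (x : En n) (t : ℝ) (i : Fin n) :
    ∫ y, wt y * (y i * fderiv ℝ f (x + t • y) (ev i)) =
      (t / 4) * ∫ y, wt y ^ 2 * fderiv ℝ (fun z => fderiv ℝ f z (ev i)) (x + t • y) (ev i) := by
  set G : En n → ℝ := fun y => fderiv ℝ f (x + t • y) (ev i) with hG
  have c1 : ContDiff ℝ 1 (fun z => fderiv ℝ f z (ev i)) :=
    (hf.fderiv_right (m := 1) (by norm_num)).clm_apply contDiff_const
  have hGd : ∀ y, HasFDerivAt G (t • fderiv ℝ (fun z => fderiv ℝ f z (ev i)) (x + t • y)) y := by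
    intro y
    have h1 : HasFDerivAt (fun y : En n => x + t • y) (t • ContinuousLinearMap.id ℝ (En n)) y :=
      ((hasFDerivAt_id y).const_smul t).const_add x
    have h2 := ((c1.differentiable (by norm_num)) (x + t • y)).hasFDerivAt.comp y h1
    refine h2.congr_fderiv ?_
    ext v
    simp
  have hGc : Continuous G := continuous_iff_continuousAt.mpr fun y => (hGd y).continuousAt
  have c2 : Continuous fun y => fderiv ℝ (fun z => fderiv ℝ f z (ev i)) (x + t • y) (ev i) := by
    have := c1.continuous_fderiv (by norm_num)
    have h3 : Continuous fun y : En n => x + t • y := by fun_prop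
    exact (this.comp h3).clm_apply continuous_const
  have e1 : ∀ y, fderiv ℝ (fun y : En n => wt y ^ 2) y (ev i) = -4 * wt y * y i := by
    intro y
    rw [(wt_sq_fderiv y).fderiv]
    simp [ev, EuclideanSpace.inner_single_right]
  have e2 : ∀ y, fderiv ℝ G y (ev i) =
      t * fderiv ℝ (fun z => fderiv ℝ f z (ev i)) (x + t • y) (ev i) := by
    intro y
    rw [(hGd y).fderiv]
    simp
  have wc := wt_cont (n := n)
  have hyi : Continuous fun y : En n => y i := by fun_prop
  have s2 : HasCompactSupport fun y : En n => wt y ^ 2 := by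
    have := wt_compact (n := n)
    exact this.comp_left (g := fun a : ℝ => a ^ 2) (by simp)
  have key := integral_mul_fderiv_eq_neg_fderiv_mul_of_integrable (μ := volume)
    (f := fun y : En n => wt y ^ 2) (g := G) (v := ev i)
    (by
      simp only [e1]
      apply Continuous.integrable_of_hasCompactSupport (by fun_prop)
      have := (wt_compact (n := n)).mul_right (f' := fun y => -4 * y i * G y)
      have e3 : (fun y : En n => -4 * wt y * y i * G y) = wt * fun y => -4 * y i * G y := by
        ext y
        simp only [Pi.mul_apply]
        ring
      rw [e3]
      exact this)
    (by
      simp only [e2]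
      apply Continuous.integrable_of_hasCompactSupport (by fun_prop)
      exact s2.mul_right)
    (by
      apply Continuous.integrable_of_hasCompactSupport (by fun_prop)
      exact s2.mul_right)
    (fun y _ => (wt_sq_fderiv y).differentiableAt)
    (fun y _ => (hGd y).differentiableAt)
  simp only [e1, e2] at key
  have l1 : ∫ y, wt y ^ 2 * (t * fderiv ℝ (fun z => fderiv ℝ f z (ev i)) (x + t • y) (ev i)) =
      t * ∫ y, wt y ^ 2 * fderiv ℝ (fun z => fderiv ℝ f z (ev i)) (x + t • y) (ev i) := by
    rw [← integral_const_mul]; congr 1; ext y; ring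
  have l2 : ∫ y : En n, -4 * wt y * y i * G y = -4 * ∫ y, wt y * (y i * G y) := by
    rw [← integral_const_mul]; congr 1; ext y; ring
  rw [l1, l2] at key
  linarith

lemma mean_deriv {n : ℕ} {f : En n → ℝ} (hf : ContDiff ℝ 2 f) (x : En n) (t : ℝ) :
    HasDerivAt (fun t : ℝ => ∫ y, wt y * f (x + t • y))
      (∫ y, wt y * fderiv ℝ f (x + t • y) y) t := by
  have wc := wt_cont (n := n)
  have fc := hf.continuous
  have f'c := hf.continuous_fderiv (by norm_num)
  -- bound on the derivative
  have hcont : Continuous fun p : ℝ × En n => fderiv ℝ f (x + p.1 • p.2) p.2 := by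
    have h3 : Continuous fun p : ℝ × En n => x + p.1 • p.2 := by fun_prop
    exact (f'c.comp h3).clm_apply continuous_snd
  obtain ⟨C, hC⟩ := ((isCompact_closedBall t 1).prod (isCompact_closedBall (0 : En n) 1)).exists_bound_of_continuousOn
    hcont.continuousOn
  have int : ∀ g : En n → ℝ, Continuous g → Integrable (fun y => wt y * g y) := by
    intro g hg
    exact Continuous.integrable_of_hasCompactSupport (by fun_prop) wt_compact.mul_right
  have := hasDerivAt_integral_of_dominated_loc_of_deriv_le (μ := (volume : Measure (En n)))
    (F := fun (t : ℝ) y => wt y * f (x + t • y))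
    (F' := fun (t : ℝ) y => wt y * fderiv ℝ f (x + t • y) y) (x₀ := t) (s := closedBall t 1)
    (bound := fun y => wt y * C) (closedBall_mem_nhds t one_pos)
    (Filter.Eventually.of_forall fun s => (int _ (by fun_prop)).aestronglyMeasurable)
    (int _ (by fun_prop))
    (by
      apply (int _ _).aestronglyMeasurable
      exact hcont.comp (by fun_prop : Continuous fun y : En n => (t, y)))
    (Filter.Eventually.of_forall fun y s hs => by
      rw [norm_mul, Real.norm_of_nonneg (wt_nonneg y)]
      by_cases hy : ‖y‖ ≤ 1
      · apply mul_le_mul_of_nonneg_left _ (wt_nonneg y)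
        exact hC (s, y) ⟨hs, by simpa using hy⟩
      · rw [wt_eq_zero (by linarith)]; simp)
    (int _ continuous_const)
    (Filter.Eventually.of_forall fun y s hs => by
      have h1 : HasDerivAt (fun s : ℝ => x + s • y) y s := by
        simpa using ((hasDerivAt_id s).smul_const y).const_add x
      exact (((hf.differentiable (by norm_num)) (x + s • y)).hasFDerivAt.comp_hasDerivAt s h1).const_mul _)
  exact this.2

lemma mean_value {n : ℕ} {f : En n → ℝ} (hf : ContDiff ℝ 2 f) (x : En n) {ρ : ℝ} (hρ : 0 < ρ)
    (hl : ∀ y ∈ ball x ρ, lap f y = 0) :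
    ∫ y, wt y * f (x + ρ • y) = f x * ∫ y : En n, wt y := by
  have hd : ∀ t ∈ Ico 0 ρ, ∫ y, wt y * fderiv ℝ f (x + t • y) y = 0 := by
    intro t ht
    have wc := wt_cont (n := n)
    have s2 : HasCompactSupport fun y : En n => wt y ^ 2 := by
      have := wt_compact (n := n)
      exact this.comp_left (g := fun a : ℝ => a ^ 2) (by simp)
    have h3 : Continuous fun y : En n => x + t • y := by fun_prop
    have e : ∀ y, wt y * fderiv ℝ f (x + t • y) y =
        ∑ i, wt y * (y i * fderiv ℝ f (x + t • y) (ev i)) := by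
      intro y
      rw [fderiv_eq_sum, Finset.mul_sum]
    simp only [e]
    rw [integral_finsetSum]
    · simp only [parts hf]
      rw [← Finset.mul_sum, ← integral_finsetSum]
      · have : ∀ y : En n, ∑ i, wt y ^ 2 * fderiv ℝ (fun z => fderiv ℝ f z (ev i)) (x + t • y) (ev i) = 0 := by
          intro y
          rw [← Finset.mul_sum]
          by_cases hy : 1 ≤ ‖y‖
          · rw [wt_eq_zero hy]; simp
          · have := hl (x + t • y) (by
              rw [mem_ball, dist_eq_norm, add_sub_cancel_left, norm_smul, Real.norm_of_nonneg ht.1]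
              push Not at hy
              have := ht.2
              have := norm_nonneg y
              nlinarith [ht.1])
            unfold lap at this
            rw [this]; simp
        simp [this]
      · intro i _
        apply Continuous.integrable_of_hasCompactSupport _ s2.mul_right
        have c1 : ContDiff ℝ 1 (fun z => fderiv ℝ f z (ev i)) :=
          (hf.fderiv_right (m := 1) (by norm_num)).clm_apply contDiff_const
        have := c1.continuous_fderiv (by norm_num)
        exact (wc.pow 2).mul ((this.comp h3).clm_apply continuous_const)
    · intro i _
      apply Continuous.integrable_of_hasCompactSupport _ wt_compact.mul_right
      have f'c := hf.continuous_fderiv (by norm_num)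
      have : Continuous fun y : En n => y i := by fun_prop
      exact wc.mul (this.mul ((f'c.comp h3).clm_apply continuous_const))
  have hc : ContinuousOn (fun t : ℝ => ∫ y, wt y * f (x + t • y)) (Icc 0 ρ) :=
    fun t _ => (mean_deriv hf x t).continuousAt.continuousWithinAt
  have := constant_of_has_deriv_right_zero hc (fun t ht => by
    have := (mean_deriv hf x t).hasDerivWithinAt (s := Ici t)
    rwa [hd t ht] at this) ρ ⟨hρ.le, le_rfl⟩
  rw [this]
  simp only [zero_smul, add_zero]
  rw [integral_mul_const, mul_comm]

lemma wt_integral_pos {n : ℕ} : 0 < ∫ y : En n, wt y := by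
  apply wt_cont.integral_pos_of_hasCompactSupport_nonneg_nonzero wt_compact
    (fun y => wt_nonneg y) (x := 0)
  simp [wt]

lemma wt_compare {n : ℕ} {a b z : En n} {ρ : ℝ} (hρ : 0 < ρ) (hab : dist a b ≤ ρ / 4) :
    wt (ρ⁻¹ • (z - a)) ≤ 2 * wt ((2 * ρ)⁻¹ • (z - b)) := by
  by_cases h : 1 ≤ ‖ρ⁻¹ • (z - a)‖
  · rw [wt_eq_zero h]; linarith [wt_nonneg ((2 * ρ)⁻¹ • (z - b))]
  push Not at h
  have h1 : ‖z - a‖ < ρ := by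
    rw [norm_smul, norm_inv, Real.norm_of_nonneg hρ.le] at h
    rwa [inv_mul_lt_iff₀ hρ, mul_one] at h
  have h2 : ‖z - b‖ ≤ 5 / 4 * ρ := by
    have : z - b = (z - a) + (a - b) := by abel
    rw [this]
    have := norm_add_le (z - a) (a - b)
    rw [← dist_eq_norm a b] at this
    linarith
  have h3 : ‖(2 * ρ)⁻¹ • (z - b)‖ ≤ 5 / 8 := by
    rw [norm_smul, norm_inv, Real.norm_of_nonneg (by linarith : 0 ≤ 2 * ρ)]
    rw [inv_mul_le_iff₀ (by linarith)]
    linarith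
  have h4 : wt (ρ⁻¹ • (z - a)) ≤ 1 := by
    unfold wt; apply max_le (by norm_num); nlinarith [sq_nonneg ‖ρ⁻¹ • (z - a)‖]
  have h5 : 1 / 2 ≤ wt ((2 * ρ)⁻¹ • (z - b)) := by
    unfold wt; apply le_max_of_le_right
    have := norm_nonneg ((2 * ρ)⁻¹ • (z - b))
    nlinarith
  linarith

lemma harnack_global {n : ℕ} {f : En n → ℝ} (hf : ContDiff ℝ 2 f) {a b : En n} {ρ : ℝ}
    (hρ : 0 < ρ) (hab : dist a b ≤ ρ / 4) (hl : ∀ y ∈ ball b (2 * ρ), lap f y = 0)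
    (hp : ∀ y ∈ ball b (2 * ρ), 0 ≤ f y) : f a ≤ 2 * 2 ^ n * f b := by
  have hI := wt_integral_pos (n := n)
  have ha := mean_value hf a hρ (fun y hy => hl y (by
    rw [mem_ball] at hy ⊢
    linarith [dist_triangle y a b]))
  have hb := mean_value hf b (by linarith : 0 < 2 * ρ) hl
  have tr : ∀ (c : En n) (s : ℝ), 0 < s → ∫ y, wt y * f (c + s • y) =
      (s ^ n)⁻¹ * ∫ z, wt (s⁻¹ • (z - c)) * f z := by
    intro c s hs
    have h1 := Measure.integral_comp_smul (volume : Measure (En n))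
      (fun y => wt (s⁻¹ • y) * f (c + y)) s
    have h2 := integral_add_left_eq_self (μ := (volume : Measure (En n)))
      (fun z => wt (s⁻¹ • (z - c)) * f z) c
    simp only [add_sub_cancel_left] at h2
    rw [h2] at h1
    simp only [smul_smul, inv_mul_cancel₀ hs.ne', one_smul] at h1
    rw [h1]
    simp only [finrank_euclideanSpace, Fintype.card_fin, smul_eq_mul]
    rw [abs_of_pos (by positivity)]
  rw [tr a ρ hρ] at ha
  rw [tr b (2 * ρ) (by linarith)] at hb
  have hcs : ∀ (c : En n) (s : ℝ), 0 < s → Integrable fun z => wt (s⁻¹ • (z - c)) * f z := by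
    intro c s hs
    have wc := wt_cont (n := n)
    have fc := hf.continuous
    apply Continuous.integrable_of_hasCompactSupport (by fun_prop)
    apply HasCompactSupport.mul_right
    apply HasCompactSupport.intro (isCompact_closedBall c s)
    intro z hz
    apply wt_eq_zero
    rw [mem_closedBall, not_le, dist_eq_norm] at hz
    rw [norm_smul, norm_inv, Real.norm_of_nonneg hs.le, le_inv_mul_iff₀ hs]
    linarith
  have mono : ∫ z, wt (ρ⁻¹ • (z - a)) * f z ≤ 2 * ∫ z, wt ((2 * ρ)⁻¹ • (z - b)) * f z := by
    rw [← integral_const_mul]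
    apply integral_mono (hcs a ρ hρ) ((hcs b (2 * ρ) (by linarith)).const_mul 2)
    intro z
    simp only
    have cmp := wt_compare (z := z) hρ hab
    by_cases hz : z ∈ ball b (2 * ρ)
    · have := mul_le_mul_of_nonneg_right cmp (hp z hz)
      linarith
    · have h0 : wt ((2 * ρ)⁻¹ • (z - b)) = 0 := by
        apply wt_eq_zero
        rw [mem_ball, not_lt, dist_eq_norm] at hz
        rw [norm_smul, norm_inv, Real.norm_of_nonneg (by linarith : 0 ≤ 2 * ρ),
          le_inv_mul_iff₀ (by linarith)]
        linarith
      rw [h0] at cmp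
      have : wt (ρ⁻¹ • (z - a)) = 0 := le_antisymm (by linarith) (wt_nonneg _)
      rw [this, h0]; simp
  have hρn : 0 < ρ ^ n := by positivity
  have h1 : f a * (∫ y : En n, wt y) ≤ (2 * 2 ^ n * f b) * ∫ y : En n, wt y := by
    rw [mul_assoc, ← ha, ← hb, mul_pow]
    have : 2 * 2 ^ n * ((2 ^ n * ρ ^ n)⁻¹ * ∫ z, wt ((2 * ρ)⁻¹ • (z - b)) * f z) =
      (ρ ^ n)⁻¹ * (2 * ∫ z, wt ((2 * ρ)⁻¹ • (z - b)) * f z) := by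
      field_simp
    rw [this]
    gcongr
  exact le_of_mul_le_mul_right h1 hI

lemma lap_congr {n : ℕ} {f g : En n → ℝ} {x : En n} (h : f =ᶠ[nhds x] g) : lap f x = lap g x := by
  unfold lap
  apply Finset.sum_congr rfl
  intro i _
  have h1 : (fun y => fderiv ℝ f y (ev i)) =ᶠ[nhds x] fun y => fderiv ℝ g y (ev i) := by
    filter_upwards [h.fderiv (𝕜 := ℝ)] with y hy
    rw [hy]
  rw [h1.fderiv_eq]

lemma harnack_ball {n : ℕ} {f : En n → ℝ} {V : Set (En n)} (hV : IsOpen V)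
    (hf : IsHarmonicOn f V) (hp : ∀ y ∈ V, 0 ≤ f y) {a b : En n} {ρ : ℝ} (hρ : 0 < ρ)
    (hab : dist a b ≤ ρ / 4) (hball : ball b (3 * ρ) ⊆ V) : f a ≤ 2 * 2 ^ n * f b := by
  let χ : ContDiffBump b := ⟨2 * ρ, 5 / 2 * ρ, by linarith, by linarith⟩
  have hg : ContDiff ℝ 2 fun y => χ y * f y := by
    rw [contDiff_iff_contDiffAt]
    intro y
    by_cases hy : y ∈ closedBall b (5 / 2 * ρ)
    · have hyV : y ∈ V := hball (by rw [mem_closedBall] at hy; rw [mem_ball]; linarith)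
      exact χ.contDiff.contDiffAt.mul (contDiffAt_of_harm hV hf hyV)
    · have : (fun y => χ y * f y) =ᶠ[nhds y] fun _ => 0 := by
        filter_upwards [isClosed_closedBall.isOpen_compl.mem_nhds hy] with z hz
        rw [χ.zero_of_le_dist, zero_mul]
        simp at hz
        exact hz.le
      exact contDiffAt_const.congr_of_eventuallyEq this
  have heq : ∀ y ∈ ball b (2 * ρ), (fun y => χ y * f y) =ᶠ[nhds y] f := by
    intro y hy
    filter_upwards [isOpen_ball.mem_nhds hy] with z hz
    rw [χ.one_of_mem_closedBall (ball_subset_closedBall hz), one_mul]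
  have hsub : ball b (2 * ρ) ⊆ V := (ball_subset_ball (by linarith)).trans hball
  have := harnack_global hg hρ hab
    (fun y hy => by rw [lap_congr (heq y hy)]; exact hf.2 y (hsub hy))
    (fun y hy => by rw [(heq y hy).eq_of_nhds]; exact hp y (hsub hy))
  rwa [(heq a (by rw [mem_ball]; linarith)).eq_of_nhds,
    (heq b (by rw [mem_ball, dist_self]; linarith)).eq_of_nhds] at this


lemma ball_subset_of_le {n : ℕ} {U : Set (En n)} (hU : IsOpen U) {x : En n} (hx : x ∈ U) {τ : ℝ}
    (hτ : τ ≤ infDist x (frontier U)) : ball x τ ⊆ U := by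
  rcases le_or_gt τ 0 with h0 | h0
  · rw [ball_eq_empty.mpr h0]; exact empty_subset _
  have hdis : ∀ y ∈ ball x τ, y ∉ frontier U := by
    intro y hy hyF
    have := infDist_le_dist_of_mem (x := x) hyF
    rw [mem_ball, dist_comm] at hy
    linarith
  refine (convex_ball x τ).isPreconnected.subset_left_of_subset_union hU
    (isClosed_closure (s := U)).isOpen_compl ?_ ?_ ⟨x, mem_ball_self h0, hx⟩
  · exact disjoint_compl_right.mono_left subset_closure
  · intro y hy
    by_cases h : y ∈ closure U
    · left
      by_contra h2
      exact hdis y hy (by rw [hU.frontier_eq]; exact ⟨h, h2⟩)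
    · right; exact h

lemma infDist_pos {n : ℕ} {U : Set (En n)} (hU : IsOpen U) (hF : (frontier U).Nonempty) {x : En n}
    (hx : x ∈ U) : 0 < infDist x (frontier U) := by
  apply (isClosed_frontier.notMem_iff_infDist_pos hF).mp
  rw [hU.frontier_eq]
  exact fun h => h.2 hx

lemma corkscrew {n : ℕ} {c C : ℝ} {U : Set (En n)} (hc : 0 < c) (hU : IsUniformDomain c C U)
    {x : En n} (hx : x ∈ U) {R : ℝ} (hR : 0 < R) (hd : ENNReal.ofReal (4 * R) < Metric.ediam U) :
    ∃ z ∈ U, dist x z = R ∧ c * R ≤ infDist z (frontier U) := by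
  have hy : ∃ y ∈ U, 2 * R ≤ dist x y := by
    by_contra hcon
    push Not at hcon
    apply absurd hd
    rw [not_lt]
    apply Metric.ediam_le
    intro y hy z hz
    rw [edist_dist]
    apply ENNReal.ofReal_le_ofReal
    have := hcon y hy
    have := hcon z hz
    have := dist_triangle_left y z x
    linarith
  obtain ⟨y, hy, hxy⟩ := hy
  obtain ⟨γ, ⟨hγc, hγm, hγ0, hγ1⟩, -, hγd⟩ := hU.2.2 x hx y hy
  have hcont : ContinuousOn (fun t => dist x (γ t)) (Icc 0 1) :=
    (by fun_prop : Continuous fun y => dist x y).comp_continuousOn hγc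
  have hmem := intermediate_value_Icc (zero_le_one (α := ℝ)) hcont
  obtain ⟨t, ht, htR⟩ := hmem (⟨by simp [hγ0, hR.le], by simp only [hγ1]; linarith⟩ :
    R ∈ Icc (dist x (γ 0)) (dist x (γ 1)))
  simp only at htR
  refine ⟨γ t, hγm ht, htR, ?_⟩
  have h1 := hγd t ht
  have h2 : R ≤ dist (γ t) y := by
    have := dist_triangle x (γ t) y
    linarith
  rw [htR, min_eq_left h2] at h1
  exact h1

lemma chain_curve {n : ℕ} {f : En n → ℝ} {V : Set (En n)} (hV : IsOpen V)
    (hf : IsHarmonicOn f V) (hp : ∀ y ∈ V, 0 ≤ f y) {γ : ℝ → En n} (hγ : ContinuousOn γ (Icc 0 1))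
    {ρ : ℝ} (hρ : 0 < ρ) (hball : ∀ t ∈ Icc (0:ℝ) 1, ball (γ t) (3 * ρ) ⊆ V) (k : ℕ) :
    ∀ a ∈ Icc (0:ℝ) 1, eVariationOn γ (Icc a 1) ≤ ENNReal.ofReal (k * (ρ / 4)) →
      f (γ a) ≤ (2 * 2 ^ n) ^ (k + 1) * f (γ 1) ∧ f (γ 1) ≤ (2 * 2 ^ n) ^ (k + 1) * f (γ a) := by
  set H : ℝ := 2 * 2 ^ n with hH
  have hH1 : 1 ≤ H := by
    have : (1:ℝ) ≤ 2 ^ n := one_le_pow₀ (by norm_num)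
    linarith
  have pos : ∀ t ∈ Icc (0:ℝ) 1, 0 ≤ f (γ t) := fun t ht =>
    hp _ (hball t ht (mem_ball_self (by linarith)))
  have one : ∀ s ∈ Icc (0:ℝ) 1, ∀ t ∈ Icc (0:ℝ) 1, dist (γ s) (γ t) ≤ ρ / 4 →
      f (γ s) ≤ H * f (γ t) := fun s _ t ht h => harnack_ball hV hf hp hρ h (hball t ht)
  have h1m : (1:ℝ) ∈ Icc (0:ℝ) 1 := ⟨zero_le_one, le_rfl⟩
  induction k with
  | zero =>
    intro a ha hvar
    have h1 := eVariationOn.edist_le γ (s := Icc a 1) (left_mem_Icc.mpr ha.2) (right_mem_Icc.mpr ha.2)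
    have h2 : edist (γ a) (γ 1) ≤ 0 := by simpa using h1.trans hvar
    have h3 : γ a = γ 1 := by simpa using h2
    rw [h3]
    simp only [zero_add, pow_one]
    have := pos 1 h1m
    constructor <;> nlinarith
  | succ k ih =>
    intro a ha hvar
    by_cases hall : dist (γ a) (γ 1) ≤ ρ / 4
    · have hp1 : H ≤ H ^ (k + 1 + 1) := by
        calc H = H ^ 1 := (pow_one H).symm
          _ ≤ H ^ (k + 1 + 1) := pow_le_pow_right₀ hH1 (by omega)
      constructor
      · exact (one a ha 1 h1m hall).trans (mul_le_mul_of_nonneg_right hp1 (pos 1 h1m))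
      · exact (one 1 h1m a ha (by rwa [dist_comm])).trans
          (mul_le_mul_of_nonneg_right hp1 (pos a ha))
    · push Not at hall
      have hsub : Icc a 1 ⊆ Icc (0:ℝ) 1 := Icc_subset_Icc_left ha.1
      have hcont : ContinuousOn (fun t => dist (γ a) (γ t)) (Icc a 1) :=
        (by fun_prop : Continuous fun y => dist (γ a) y).comp_continuousOn (hγ.mono hsub)
      obtain ⟨s, hs, hsρ⟩ := intermediate_value_Icc ha.2 hcont
        (⟨by simp; linarith, hall.le⟩ : ρ / 4 ∈ Icc (dist (γ a) (γ a)) (dist (γ a) (γ 1)))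
      simp only at hsρ
      have hsm := hsub hs
      have hadd := eVariationOn.Icc_add_Icc γ (s := univ) hs.1 hs.2 (mem_univ s)
      simp only [univ_inter] at hadd
      have h1 := eVariationOn.edist_le γ (s := Icc a s) (left_mem_Icc.mpr hs.1) (right_mem_Icc.mpr hs.1)
      rw [edist_dist, hsρ] at h1
      have h2 : eVariationOn γ (Icc s 1) ≤ ENNReal.ofReal (k * (ρ / 4)) := by
        have h3 : ENNReal.ofReal (ρ / 4) + eVariationOn γ (Icc s 1) ≤
            ENNReal.ofReal (ρ / 4) + ENNReal.ofReal (k * (ρ / 4)) := by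
          calc _ ≤ eVariationOn γ (Icc a s) + eVariationOn γ (Icc s 1) := by gcongr
            _ = eVariationOn γ (Icc a 1) := hadd
            _ ≤ _ := hvar
            _ = _ := by
              rw [← ENNReal.ofReal_add (by positivity) (by positivity)]
              congr 1
              push_cast
              ring
        exact (ENNReal.add_le_add_iff_left ENNReal.ofReal_ne_top).mp h3
      obtain ⟨i1, i2⟩ := ih s hsm h2
      have o1 := one a ha s hsm hsρ.le
      have o2 := one s hsm a ha (by rw [dist_comm]; exact hsρ.le)
      have hHp : 0 ≤ H ^ (k + 1) := by positivity
      constructor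
      · calc f (γ a) ≤ H * f (γ s) := o1
          _ ≤ H * (H ^ (k + 1) * f (γ 1)) := by gcongr
          _ = _ := by ring
      · calc f (γ 1) ≤ H ^ (k + 1) * f (γ s) := i2
          _ ≤ H ^ (k + 1) * (H * f (γ a)) := by gcongr
          _ = _ := by ring

/-- Harnack chains. -/
lemma chain {n : ℕ} {c C : ℝ} (hc : c ∈ Ioo (0:ℝ) 1) (hC : 1 < C) {Λ : ℝ} (hΛ : 0 < Λ) :
    ∃ H : ℝ, 2 ≤ H ∧ ∀ U : Set (En n), IsUniformDomain c C U → (frontier U).Nonempty →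
      ∀ x ∈ U, ∀ y ∈ U, ∀ s : ℝ, 0 < s → s ≤ infDist x (frontier U) → s ≤ infDist y (frontier U) →
      dist x y ≤ Λ * s → ∀ W : Set (En n), IsOpen W → ball x ((C * Λ + 1) * s) ⊆ W →
      ∀ f : En n → ℝ, IsHarmonicOn f (U ∩ W) → (∀ y ∈ U ∩ W, 0 ≤ f y) →
      f x ≤ H * f y ∧ f y ≤ H * f x := by
  obtain ⟨hc0, hc1⟩ := hc
  set k : ℕ := ⌈24 * C * Λ / c⌉₊ with hk
  have hkle : 24 * C * Λ / c ≤ k := Nat.le_ceil _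
  refine ⟨(2 * 2 ^ n) ^ (k + 1), ?_, ?_⟩
  · have h1 : (1:ℝ) ≤ 2 ^ n := one_le_pow₀ (by norm_num)
    calc (2:ℝ) ≤ 2 * 2 ^ n := by linarith
      _ = (2 * 2 ^ n) ^ 1 := (pow_one _).symm
      _ ≤ _ := pow_le_pow_right₀ (by linarith) (by omega)
  intro U hU hF x hx y hy s hs hdx hdy hxy W hW hWb f hf hp
  obtain ⟨γ, ⟨hγc, hγm, hγ0, hγ1⟩, hγl, hγd⟩ := hU.2.2 x hx y hy
  have hdist : ∀ t ∈ Icc (0:ℝ) 1, dist x (γ t) ≤ C * Λ * s := by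
    intro t ht
    have h1 := (eVariationOn.edist_le γ (s := Icc 0 1) (left_mem_Icc.mpr zero_le_one) ht).trans hγl
    rw [hγ0, edist_dist] at h1
    have h2 := (ENNReal.ofReal_le_ofReal_iff (by positivity)).mp h1
    have : C * dist x y ≤ C * (Λ * s) := by gcongr
    linarith
  have hdγ : ∀ t ∈ Icc (0:ℝ) 1, c * s / 2 ≤ infDist (γ t) (frontier U) := by
    intro t ht
    have h1 := hγd t ht
    have h2 : infDist x (frontier U) ≤ infDist (γ t) (frontier U) + dist x (γ t) :=
      infDist_le_infDist_add_dist
    have h3 : infDist y (frontier U) ≤ infDist (γ t) (frontier U) + dist y (γ t) :=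
      infDist_le_infDist_add_dist
    rw [dist_comm y] at h3
    have hcs : c * s ≤ s := by nlinarith
    by_contra hcon
    push Not at hcon
    have h4 : s / 2 ≤ dist x (γ t) := by linarith
    have h5 : s / 2 ≤ dist (γ t) y := by linarith
    have h6 := le_min h4 h5
    have := mul_le_mul_of_nonneg_left h6 hc0.le
    linarith
  have hcs : 0 < c * s := by positivity
  have hcs' : c * s ≤ s := by nlinarith
  have key := chain_curve (hU.1.inter hW) hf hp hγc (ρ := c * s / 6) (by positivity)
    (by
      intro t ht z hz
      have e : 3 * (c * s / 6) = c * s / 2 := by ring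
      rw [e] at hz
      refine ⟨ball_subset_of_le hU.1 (hγm ht) (hdγ t ht) hz, hWb ?_⟩
      rw [mem_ball] at hz ⊢
      have h1 := hdist t ht
      have h2 := dist_triangle z (γ t) x
      rw [dist_comm (γ t) x] at h2
      have : (C * Λ + 1) * s = C * Λ * s + s := by ring
      linarith) k 0 (left_mem_Icc.mpr zero_le_one)
    (by
      refine le_trans hγl (ENNReal.ofReal_le_ofReal ?_)
      have h1 : C * dist x y ≤ C * (Λ * s) := by gcongr
      have h2 : C * (Λ * s) = (24 * C * Λ / c) * (c * s / 6 / 4) := by field_simp; ring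
      have h3 : (24 * C * Λ / c) * (c * s / 6 / 4) ≤ k * (c * s / 6 / 4) := by gcongr
      linarith)
  rwa [hγ0, hγ1] at key

/-- Doubling the distance to the boundary. -/
lemma doubling {n : ℕ} {c C : ℝ} (hc : c ∈ Ioo (0:ℝ) 1) (hC : 1 < C) :
    ∃ H : ℝ, 2 ≤ H ∧ ∀ U : Set (En n), IsUniformDomain c C U → (frontier U).Nonempty →
      ∀ x ∈ U, ∀ s : ℝ, 0 < s → s ≤ infDist x (frontier U) →
      ENNReal.ofReal (8 * s / c) < Metric.ediam U →
      ∃ z ∈ U, dist x z ≤ 2 / c * s ∧ 2 * s ≤ infDist z (frontier U) ∧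
      ∀ W : Set (En n), IsOpen W → ball x ((C * (2 / c) + 1) * s) ⊆ W →
      ∀ f : En n → ℝ, IsHarmonicOn f (U ∩ W) → (∀ y ∈ U ∩ W, 0 ≤ f y) →
      f x ≤ H * f z ∧ f z ≤ H * f x := by
  have hc0 := hc.1
  obtain ⟨H, hH, hch⟩ := chain (n := n) hc hC (Λ := 2 / c) (by positivity)
  refine ⟨H, hH, ?_⟩
  intro U hU hF x hx s hs hdx hdiam
  obtain ⟨z, hz, hxz, hdz⟩ := corkscrew hc0 hU hx (R := 2 / c * s) (by positivity)
    (by convert hdiam using 2; ring)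
  have hdz' : 2 * s ≤ infDist z (frontier U) := by
    have : c * (2 / c * s) = 2 * s := by field_simp
    linarith
  exact ⟨z, hz, hxz.le, hdz', fun W hW hWb f hf hp =>
    hch U hU hF x hx z hz s hs hdx (by linarith) hxz.le W hW hWb f hf hp⟩

/-- Subsolution data on `U ∩ W`. -/
def SubSol {n : ℕ} (U W : Set (En n)) (w : En n → ℝ) : Prop :=
  IsHarmonicOn w (U ∩ W) ∧ ContinuousOn w (closure (U ∩ W)) ∧ ∀ y ∈ frontier U ∩ W, w y ≤ 0

lemma decay {n : ℕ} (hn : 1 ≤ n) {c C : ℝ} (hc : c ∈ Ioo (0:ℝ) 1) :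
    ∃ θ ∈ Ioo (0:ℝ) 1, ∀ U : Set (En n), IsUniformDomain c C U →
      ∀ W : Set (En n), IsOpen W → ∀ w : En n → ℝ, SubSol U W w →
      ∀ t : ℝ, 0 < t → ENNReal.ofReal (8 * t / c) < Metric.ediam U →
      ∀ S : ℝ, 0 < S → ∀ m : ℕ, ∀ x ∈ U, closedBall x (m * (7 / c * t)) ⊆ W →
      (∀ y ∈ U ∩ closedBall x (m * (7 / c * t)), w y ≤ S) →
      (∀ y ∈ U ∩ closedBall x (m * (7 / c * t)), t ≤ infDist y (frontier U) → w y ≤ 0) →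
      w x ≤ θ ^ m * S := by
  have hc0 := hc.1
  have hn' : (0:ℝ) < n := by exact_mod_cast hn
  set θ : ℝ := 1 - (Real.exp (-(4 * n / c ^ 2)) - Real.exp (-(16 * n / c ^ 2))) with hθ
  have hpos : 0 < (n:ℝ) / c ^ 2 := by positivity
  have h1 : Real.exp (-(16 * n / c ^ 2)) < Real.exp (-(4 * n / c ^ 2)) := by
    apply Real.exp_lt_exp.mpr
    rw [mul_div_assoc, mul_div_assoc]
    linarith
  have h2 : Real.exp (-(4 * n / c ^ 2)) < 1 := by
    rw [Real.exp_lt_one_iff]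
    rw [mul_div_assoc]
    linarith
  have h3 := Real.exp_pos (-(16 * n / c ^ 2))
  have hθ0 : 0 < θ := by rw [hθ]; linarith
  refine ⟨θ, ⟨hθ0, by rw [hθ]; linarith⟩, ?_⟩
  intro U hU W hW w hw t ht hdiam S hS m
  have hct : 0 < 7 / c * t := by positivity
  induction m with
  | zero =>
    intro x hx _ hle _
    simpa using hle x ⟨hx, by simp⟩
  | succ m ih =>
    intro x hx hW' hle hle0
    have hm1 : ((m + 1 : ℕ) : ℝ) * (7 / c * t) = 7 / c * t + m * (7 / c * t) := by push_cast; ring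
    have hm0 : 0 ≤ (m:ℝ) * (7 / c * t) := by positivity
    have hsub : ∀ y ∈ closedBall x (7 / c * t), closedBall y (m * (7 / c * t)) ⊆
        closedBall x ((m + 1 : ℕ) * (7 / c * t)) := by
      intro y hy
      apply closedBall_subset_closedBall'
      rw [hm1]
      rw [mem_closedBall] at hy
      linarith
    have hbound : ∀ y ∈ U ∩ closedBall x (7 / c * t), w y ≤ θ ^ m * S := by
      intro y hy
      have hs := hsub y hy.2
      exact ih y hy.1 (hs.trans hW') (fun z hz => hle z ⟨hz.1, hs hz.2⟩)
        (fun z hz => hle0 z ⟨hz.1, hs hz.2⟩)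
    have hsub1 : closedBall x (7 / c * t) ⊆ closedBall x ((m + 1 : ℕ) * (7 / c * t)) :=
      closedBall_subset_closedBall (by rw [hm1]; linarith)
    obtain ⟨z, hz, hxz, hdz⟩ := corkscrew hc0 hU hx (R := 2 / c * t) (by positivity)
      (by convert hdiam using 2; ring)
    have hdz' : 2 * t ≤ infDist z (frontier U) := by
      have : c * (2 / c * t) = 2 * t := by field_simp
      linarith
    have hzx : closedBall z (4 / c * t) ⊆ closedBall x (7 / c * t) := by
      apply closedBall_subset_closedBall'
      rw [dist_comm, hxz]
      have : 0 < t / c := by positivity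
      have e1 : 4 / c * t + 2 / c * t = 6 * (t / c) := by ring
      have e2 : 7 / c * t = 7 * (t / c) := by ring
      rw [e1, e2]; linarith
    have htc : t ≤ 4 / c * t := by
      have : 1 ≤ 4 / c := by rw [le_div_iff₀ hc0]; linarith [hc.2]
      nlinarith
    have key := growth hn hU.1 hW hw.1 hw.2.1 hw.2.2 (z := z) (R := 4 / c * t) (s := t)
      (S := θ ^ m * S) ht (by positivity) (hzx.trans (hsub1.trans hW'))
      (fun y hy => hbound y ⟨hy.1, hzx hy.2⟩)
      (fun y hy _ => by
        apply hle0 y ⟨hy.1, hsub1 (hzx (closedBall_subset_closedBall htc hy.2))⟩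
        have h5 : infDist z (frontier U) ≤ infDist y (frontier U) + dist z y :=
          infDist_le_infDist_add_dist
        have h6 := hy.2
        rw [mem_closedBall, dist_comm] at h6
        linarith)
      hx (by rw [hxz]; apply le_of_eq; ring)
    have e1 : -((n:ℝ) / t ^ 2) * (4 / c * t / 2) ^ 2 = -(4 * n / c ^ 2) := by field_simp; ring
    have e2 : -((n:ℝ) / t ^ 2) * (4 / c * t) ^ 2 = -(16 * n / c ^ 2) := by field_simp; ring
    rw [e1, e2, ← hθ] at key
    calc w x ≤ θ * (θ ^ m * S) := key
      _ = _ := by ring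


lemma diam_mono {n : ℕ} {U : Set (En n)} {c r t : ℝ} (hc : 0 < c) (htr : t ≤ r)
    (h : ENNReal.ofReal (8 * r / c) < Metric.ediam U) :
    ENNReal.ofReal (8 * t / c) < Metric.ediam U :=
  lt_of_le_of_lt (ENNReal.ofReal_le_ofReal (by gcongr)) h

lemma neg_subsol {n : ℕ} {U W : Set (En n)} (hV : IsOpen (U ∩ W)) {w : En n → ℝ}
    (hw : IsHarmonicOn w (U ∩ W))
    (hc : ContinuousOn w (closure (U ∩ W))) (hbd : ∀ y ∈ frontier U ∩ W, 0 ≤ w y) :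
    SubSol U W fun x => - w x := by
  refine ⟨?_, hc.neg, fun y hy => by have := hbd y hy; linarith⟩
  have := harm_comb hV hw hw (-1) 0 0
  simpa using this

/-- The positivity propagation lemma. -/
lemma positivity_lemma {n : ℕ} (hn : 1 ≤ n) {c C : ℝ} (hc : c ∈ Ioo (0:ℝ) 1) (hC : 1 < C) :
    ∃ δ ∈ Ioo (0:ℝ) 1, ∀ U : Set (En n), IsUniformDomain c C U → (frontier U).Nonempty →
      ∀ W : Set (En n), IsOpen W → ∀ w : En n → ℝ, IsHarmonicOn w (U ∩ W) →
      ContinuousOn w (closure (U ∩ W)) → (∀ y ∈ frontier U ∩ W, 0 ≤ w y) →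
      ∀ x ∈ U, ∀ ρ : ℝ, 0 < ρ → ENNReal.ofReal (8 * ρ / c) < Metric.ediam U →
      closedBall x ρ ⊆ W → ∀ b : ℝ, 0 < b →
      (∀ y ∈ U ∩ closedBall x ρ, -b ≤ w y) →
      (∀ y ∈ U ∩ closedBall x ρ, δ * ρ ≤ infDist y (frontier U) → b ≤ w y) →
      0 < w x := by
  have hc0 := hc.1
  obtain ⟨H, hH, hdbl⟩ := doubling (n := n) hc hC
  obtain ⟨θ, hθ, hdecay⟩ := decay hn (C := C) hc
  set a : ℝ := 1 / (2 * H) with ha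
  have ha0 : 0 < a := by positivity
  obtain ⟨m, hm⟩ := exists_pow_lt_of_lt_one ha0 hθ.2
  set Q : ℝ := m * (7 / c) + (C * (2 / c) + 1) + 1 / c + 1 with hQ
  have hm0 : 0 ≤ (m:ℝ) * (7 / c) := by positivity
  have hK0 : 0 < C * (2 / c) + 1 := by positivity
  have hc10 : 0 < 1 / c := by positivity
  have hQ1 : 1 < Q := by rw [hQ]; linarith
  set δ : ℝ := 1 / (4 * Q) with hδ
  have hδ0 : 0 < δ := by positivity
  have hδQ : δ * Q = 1 / 4 := by rw [hδ]; field_simp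
  have d1 : δ * (m * (7 / c)) ≤ 1 / 4 := by
    rw [← hδQ]; gcongr; rw [hQ]; linarith
  have d2 : δ * (C * (2 / c) + 1) ≤ 1 / 4 := by
    rw [← hδQ]; gcongr; rw [hQ]; linarith
  have d3 : δ * (1 / c) ≤ 1 / 4 := by
    rw [← hδQ]; gcongr; rw [hQ]; linarith
  have d4 : δ < 1 := by nlinarith
  refine ⟨δ, ⟨hδ0, d4⟩, ?_⟩
  intro U hU hF W hW w hw hwc hbd x hx
  have hV : IsOpen (U ∩ W) := hU.1.inter hW
  have step : ∀ ρ : ℝ, 0 < ρ → ENNReal.ofReal (8 * ρ / c) < Metric.ediam U →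
      closedBall x ρ ⊆ W → ∀ b : ℝ, 0 < b →
      (∀ y ∈ U ∩ closedBall x ρ, -b ≤ w y) →
      (∀ y ∈ U ∩ closedBall x ρ, δ * ρ ≤ infDist y (frontier U) → b ≤ w y) →
      (∀ y ∈ U ∩ closedBall x (ρ / 2), -(a * b) ≤ w y) ∧
      (∀ y ∈ U ∩ closedBall x (ρ / 2), δ * (ρ / 2) ≤ infDist y (frontier U) → a * b ≤ w y) := by
    intro ρ hρ hdiam hball b hb hlow hhigh
    have hab : 0 < a * b := by positivity
    have low : ∀ y ∈ U ∩ closedBall x (3 / 4 * ρ), -(a * b) ≤ w y := by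
      intro y hy
      have hsub : closedBall y (m * (7 / c * (δ * ρ))) ⊆ closedBall x ρ := by
        apply closedBall_subset_closedBall'
        have h1 := hy.2
        rw [mem_closedBall] at h1
        have h2 : m * (7 / c * (δ * ρ)) = δ * (m * (7 / c)) * ρ := by ring
        have h3 : δ * (m * (7 / c)) * ρ ≤ 1 / 4 * ρ := by gcongr
        linarith
      have := hdecay U hU W hW _ (neg_subsol hV hw hwc hbd) (δ * ρ) (by positivity)
        (diam_mono hc0 (by nlinarith) hdiam) b hb m y hy.1 (hsub.trans hball)
        (fun z hz => by have := hlow z ⟨hz.1, hsub hz.2⟩; linarith)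
        (fun z hz hdz => by have := hhigh z ⟨hz.1, hsub hz.2⟩ hdz; linarith)
      have h4 : θ ^ m * b ≤ a * b := by gcongr
      linarith
    refine ⟨fun y hy => low y ⟨hy.1, closedBall_subset_closedBall (by linarith) hy.2⟩, ?_⟩
    intro y hy hdy
    obtain ⟨z, hz, hyz, hdz, hhar⟩ := hdbl U hU hF y hy.1 (δ * (ρ / 2)) (by positivity) hdy
      (diam_mono hc0 (by nlinarith) hdiam)
    have hyx := hy.2
    rw [mem_closedBall] at hyx
    set W' := ball y ((C * (2 / c) + 1) * (δ * (ρ / 2))) with hW'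
    have hrad : (C * (2 / c) + 1) * (δ * (ρ / 2)) ≤ 1 / 4 * ρ := by
      have h1 : (C * (2 / c) + 1) * (δ * (ρ / 2)) = δ * (C * (2 / c) + 1) * (ρ / 2) := by ring
      have h2 : δ * (C * (2 / c) + 1) * (ρ / 2) ≤ 1 / 4 * (ρ / 2) := by gcongr
      linarith
    have hsubW : W' ⊆ closedBall x (3 / 4 * ρ) := by
      intro p hp
      rw [hW', mem_ball] at hp
      rw [mem_closedBall]
      linarith [dist_triangle p y x]
    have hsubW2 : W' ⊆ W := (hsubW.trans (closedBall_subset_closedBall (by linarith))).trans hball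
    have hfh : IsHarmonicOn (fun p => 1 * w p + 0 * w p + a * b) (U ∩ W') := by
      have h0 := harm_comb hV hw hw 1 0 (a * b)
      exact ⟨h0.1.mono (inter_subset_inter_right U hsubW2),
        fun p hp => h0.2 p ⟨hp.1, hsubW2 hp.2⟩⟩
    have h1 := (hhar W' isOpen_ball subset_rfl _ hfh (fun p hp => by
      have := low p ⟨hp.1, hsubW hp.2⟩
      linarith)).2
    have hzw : b ≤ w z := by
      apply hhigh z ⟨hz, ?_⟩ (by linarith)
      rw [mem_closedBall]
      have h5 : 2 / c * (δ * (ρ / 2)) = δ * (1 / c) * ρ := by ring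
      have h6 : δ * (1 / c) * ρ ≤ 1 / 4 * ρ := by gcongr
      have h7 := dist_triangle z y x
      rw [dist_comm z y] at h7
      linarith
    have hHa : H * a = 1 / 2 := by rw [ha]; field_simp
    have h8 : H * (a * b) = 1 / 2 * b := by rw [← mul_assoc, hHa]
    have h9 : H * (a * b) ≤ H * w y := by
      have : H * (1 * w y + 0 * w y + a * b) = H * w y + H * (a * b) := by ring
      rw [this] at h1
      linarith
    exact le_of_mul_le_mul_left h9 (by linarith)
  intro ρ hρ hdiam hball b hb hlow hhigh
  have iter : ∀ k : ℕ, (∀ y ∈ U ∩ closedBall x (ρ / 2 ^ k), -(a ^ k * b) ≤ w y) ∧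
      (∀ y ∈ U ∩ closedBall x (ρ / 2 ^ k), δ * (ρ / 2 ^ k) ≤ infDist y (frontier U) →
        a ^ k * b ≤ w y) := by
    intro k
    induction k with
    | zero => simpa using ⟨fun y h1 h2 => hlow y ⟨h1, h2⟩, fun y h1 h2 => hhigh y ⟨h1, h2⟩⟩
    | succ k ih =>
      have hle : ρ / 2 ^ k ≤ ρ := div_le_self hρ.le (one_le_pow₀ (by norm_num))
      have := step (ρ / 2 ^ k) (by positivity) (diam_mono hc0 hle hdiam)
        ((closedBall_subset_closedBall hle).trans hball) (a ^ k * b) (by positivity) ih.1 ih.2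
      have e1 : ρ / 2 ^ k / 2 = ρ / 2 ^ (k + 1) := by rw [pow_succ]; field_simp
      have e2 : a * (a ^ k * b) = a ^ (k + 1) * b := by ring
      rwa [e1, e2] at this
  have hdx := infDist_pos hU.1 hF hx
  obtain ⟨k, hk⟩ := exists_pow_lt_of_lt_one (show 0 < infDist x (frontier U) / (δ * ρ) by positivity)
    (show (1 / 2 : ℝ) < 1 by norm_num)
  have h1 : δ * (ρ / 2 ^ k) ≤ infDist x (frontier U) := by
    rw [lt_div_iff₀ (by positivity)] at hk
    have : δ * (ρ / 2 ^ k) = (1 / 2) ^ k * (δ * ρ) := by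
      rw [one_div, inv_pow]; field_simp
    linarith
  have := (iter k).2 x ⟨hx, mem_closedBall_self (by positivity)⟩ h1
  have h2 : 0 < a ^ k * b := by positivity
  linarith

/-- Climbing away from the boundary. -/
lemma climb {n : ℕ} {c C : ℝ} (hc : c ∈ Ioo (0:ℝ) 1) (hC : 1 < C) :
    ∃ H : ℝ, 2 ≤ H ∧ ∀ U : Set (En n), IsUniformDomain c C U → (frontier U).Nonempty →
      ∀ r : ℝ, 0 < r → ENNReal.ofReal (8 * r / c) < Metric.ediam U →
      ∀ W : Set (En n), IsOpen W →
      ∀ f : En n → ℝ, IsHarmonicOn f (U ∩ W) → (∀ y ∈ U ∩ W, 0 ≤ f y) →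
      ∀ k : ℕ, ∀ y ∈ U, r / 2 ^ k ≤ infDist y (frontier U) →
      ball y (2 / c * r * (1 - 1 / 2 ^ k) + (C * (2 / c) + 1) * r) ⊆ W →
      ∃ z ∈ U, r ≤ infDist z (frontier U) ∧ dist y z ≤ 2 / c * r * (1 - 1 / 2 ^ k) ∧
        f y ≤ H ^ k * f z ∧ f z ≤ H ^ k * f y := by
  have hc0 := hc.1
  obtain ⟨H, hH, hdbl⟩ := doubling (n := n) hc hC
  refine ⟨H, hH, ?_⟩
  intro U hU hF r hr hdiam W hW f hf hp k
  have hK0 : 0 < C * (2 / c) + 1 := by positivity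
  induction k with
  | zero =>
    intro y hy hd _
    exact ⟨y, hy, by simpa using hd, by simp, by simp, by simp⟩
  | succ k ih =>
    intro y hy hd hball
    have h2k : (0:ℝ) < 2 ^ k := by positivity
    have hsle : r / 2 ^ (k + 1) ≤ r := div_le_self hr.le (one_le_pow₀ (by norm_num))
    have hle1 : (0:ℝ) ≤ 1 - 1 / 2 ^ k := by
      rw [sub_nonneg, div_le_one h2k]; exact one_le_pow₀ (by norm_num)
    have hle2 : (0:ℝ) ≤ 1 - 1 / 2 ^ (k + 1) := by
      rw [sub_nonneg, div_le_one (by positivity)]; exact one_le_pow₀ (by norm_num)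
    obtain ⟨z1, hz1, hyz1, hdz1, hhar⟩ := hdbl U hU hF y hy (r / 2 ^ (k + 1)) (by positivity) hd
      (diam_mono hc0 hsle hdiam)
    have e1 : 2 * (r / 2 ^ (k + 1)) = r / 2 ^ k := by rw [pow_succ]; field_simp
    rw [e1] at hdz1
    have e2 : 2 / c * r * (1 - 1 / 2 ^ k) + 2 / c * (r / 2 ^ (k + 1)) =
        2 / c * r * (1 - 1 / 2 ^ (k + 1)) := by rw [pow_succ]; field_simp; ring
    obtain ⟨z, hz, hdz, hz1z, i1, i2⟩ := ih z1 hz1 hdz1 (by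
      refine Subset.trans ?_ hball
      apply ball_subset_ball'
      rw [dist_comm]
      linarith)
    have h0 : 0 ≤ 2 / c * r * (1 - 1 / 2 ^ (k + 1)) := by positivity
    have hyW : ball y ((C * (2 / c) + 1) * (r / 2 ^ (k + 1))) ⊆ W := by
      refine Subset.trans (ball_subset_ball ?_) hball
      have : (C * (2 / c) + 1) * (r / 2 ^ (k + 1)) ≤ (C * (2 / c) + 1) * r := by gcongr
      linarith
    obtain ⟨j1, j2⟩ := hhar W hW hyW f hf hp
    refine ⟨z, hz, hdz, ?_, ?_, ?_⟩
    · linarith [dist_triangle y z1 z]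
    · calc f y ≤ H * f z1 := j1
        _ ≤ H * (H ^ k * f z) := by gcongr
        _ = _ := by ring
    · calc f z ≤ H ^ k * f z1 := i2
        _ ≤ H ^ k * (H * f y) := by gcongr
        _ = _ := by ring

/-- Comparison with the value at a central point. -/
lemma compare {n : ℕ} {c C : ℝ} (hc : c ∈ Ioo (0:ℝ) 1) (hC : 1 < C) :
    ∃ H : ℝ, 2 ≤ H ∧ ∃ L : ℝ, 1 ≤ L ∧ ∃ A : ℝ, 3 < A ∧
      ∀ U : Set (En n), IsUniformDomain c C U → ∀ ξ ∈ frontier U,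
      ∀ r : ℝ, 0 < r → ENNReal.ofReal (8 * r / c) < Metric.ediam U →
      ∃ x₀ ∈ U ∩ ball ξ (A * r),
      ∀ f : En n → ℝ, IsHarmonicOn f (U ∩ ball ξ (A * r)) → (∀ y ∈ U ∩ ball ξ (A * r), 0 ≤ f y) →
      ∀ k : ℕ, ∀ y ∈ U ∩ ball ξ (3 * r), r / 2 ^ k ≤ infDist y (frontier U) →
      f y ≤ L * H ^ k * f x₀ ∧ f x₀ ≤ L * H ^ k * f y := by
  have hc0 := hc.1
  obtain ⟨H, hH, hcl⟩ := climb (n := n) hc hC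
  set Λ : ℝ := 4 + 3 / c with hΛ
  have hΛ0 : 0 < Λ := by positivity
  obtain ⟨L, hL, hch⟩ := chain (n := n) hc hC hΛ0
  set A : ℝ := 4 + 2 / c + (C * Λ + 1) + (C * (2 / c) + 1) with hA
  have hCΛ : 0 < C * Λ + 1 := by positivity
  have hK0 : 0 < C * (2 / c) + 1 := by positivity
  have hc2 : 0 < 1 / c := by positivity
  have e2c : 2 / c = 2 * (1 / c) := by ring
  have e3c : 3 / c = 3 * (1 / c) := by ring
  refine ⟨H, hH, L, by linarith, A, by rw [hA]; linarith, ?_⟩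
  intro U hU ξ hξ r hr hdiam
  have hF : (frontier U).Nonempty := ⟨ξ, hξ⟩
  have hcl' : ξ ∈ closure U := frontier_subset_closure hξ
  obtain ⟨p, hp, hpξ⟩ := Metric.mem_closure_iff.mp hcl' r hr
  have hdiam' : ENNReal.ofReal (4 * (1 / c * r)) < Metric.ediam U := by
    refine lt_of_le_of_lt (ENNReal.ofReal_le_ofReal ?_) hdiam
    have : 8 * r / c = 8 * (1 / c * r) := by ring
    rw [this]
    have : 0 < 1 / c * r := by positivity
    linarith
  obtain ⟨x₀, hx₀, hpx, hdx⟩ := corkscrew hc0 hU hp (R := 1 / c * r) (by positivity) hdiam'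
  have hdx' : r ≤ infDist x₀ (frontier U) := by
    have : c * (1 / c * r) = r := by field_simp
    linarith
  have hxξ : dist x₀ ξ < r + 1 / c * r := by
    have := dist_triangle ξ p x₀
    rw [dist_comm x₀]
    linarith
  have hcr : 0 < 1 / c * r := by positivity
  have hAr : A * r = 4 * r + 2 * (1 / c * r) + (C * Λ + 1) * r + (C * (2 / c) + 1) * r := by
    rw [hA, e2c]; ring
  have p1 : 0 < (C * Λ + 1) * r := by positivity
  have p2 : 0 < (C * (2 / c) + 1) * r := by positivity
  refine ⟨x₀, ⟨hx₀, by rw [mem_ball, hAr]; linarith⟩, ?_⟩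
  intro f hf hfp k y hy hdy
  have hyξ := hy.2
  rw [mem_ball] at hyξ
  have hpk : 2 / c * r * (1 - 1 / 2 ^ k) ≤ 2 * (1 / c * r) := by
    have h1 : (0:ℝ) < 1 / 2 ^ k := by positivity
    have h2 : 2 / c * r * (1 - 1 / 2 ^ k) = 2 * (1 / c * r) - 2 * (1 / c * r) * (1 / 2 ^ k) := by
      rw [e2c]; ring
    rw [h2]
    have : 0 < 2 * (1 / c * r) * (1 / 2 ^ k) := by positivity
    linarith
  obtain ⟨z, hz, hdz, hyz, i1, i2⟩ := hcl U hU hF r hr hdiam (ball ξ (A * r)) isOpen_ball f hf hfp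
    k y hy.1 hdy (by
      apply ball_subset_ball'
      rw [hAr]
      linarith)
  have hzξ : dist z ξ < 3 * r + 2 * (1 / c * r) := by
    have := dist_triangle z y ξ
    rw [dist_comm z y] at this
    linarith
  obtain ⟨j1, j2⟩ := hch U hU hF z hz x₀ hx₀ r hr hdz hdx' (by
      have h1 := dist_triangle_right z x₀ ξ
      have : Λ * r = 4 * r + 3 * (1 / c * r) := by rw [hΛ, e3c]; ring
      rw [this]
      linarith) (ball ξ (A * r)) isOpen_ball (by
      apply ball_subset_ball'
      rw [hAr]
      linarith) f hf hfp
  have hHk : 0 ≤ H ^ k := by positivity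
  constructor
  · calc f y ≤ H ^ k * f z := i1
      _ ≤ H ^ k * (L * f x₀) := by gcongr
      _ = _ := by ring
  · calc f x₀ ≤ L * f z := j2
      _ ≤ L * (H ^ k * f y) := by gcongr
      _ = _ := by ring

/-- One-sided boundary Harnack principle. -/
lemma onesided {n : ℕ} (hn : 1 ≤ n) {c C : ℝ} (hc : c ∈ Ioo (0:ℝ) 1) (hC : 1 < C) :
    ∃ A : ℝ, 3 < A ∧ ∃ B : ℝ, 1 < B ∧
      ∀ U : Set (En n), IsUniformDomain c C U → ∀ ξ ∈ frontier U,
      ∀ r : ℝ, 0 < r → ENNReal.ofReal (8 * r / c) < Metric.ediam U →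
      ∃ x₀ ∈ U ∩ ball ξ (A * r), ∀ u v : En n → ℝ,
          (∀ z ∈ U ∩ Metric.ball ξ (A * r), 0 < u z) →
          IsHarmonicOn u (U ∩ Metric.ball ξ (A * r)) →
          ContinuousOn u (closure (U ∩ Metric.ball ξ (A * r))) →
          (∀ z ∈ frontier U ∩ Metric.ball ξ (A * r), u z = 0) →
          (∀ z ∈ U ∩ Metric.ball ξ (A * r), 0 < v z) →
          IsHarmonicOn v (U ∩ Metric.ball ξ (A * r)) →
          ContinuousOn v (closure (U ∩ Metric.ball ξ (A * r))) →
          (∀ z ∈ frontier U ∩ Metric.ball ξ (A * r), v z = 0) →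
          ∀ x ∈ U ∩ Metric.ball ξ r, u x * v x₀ ≤ B * (v x * u x₀) := by
  have hc0 := hc.1
  obtain ⟨δ, hδ, hposl⟩ := positivity_lemma hn hc hC
  obtain ⟨θ, hθ, hdecay⟩ := decay hn (C := C) hc
  obtain ⟨H, hH, L, hL, A, hA, hcmp⟩ := compare (n := n) hc hC
  obtain ⟨m, hm⟩ := exists_pow_lt_of_lt_one (show 0 < 1 / (2 * H) by positivity) hθ.2
  obtain ⟨k₀, hk₀⟩ := pow_unbounded_of_one_lt (2 * (m * (7 / c))) (one_lt_two (α := ℝ))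
  obtain ⟨k₁, hk₁⟩ := exists_pow_lt_of_lt_one hδ.1 (show (1 / 2 : ℝ) < 1 by norm_num)
  set C₁ : ℝ := 2 * (L * H ^ k₀) with hC₁
  set C₂ : ℝ := L * H ^ k₁ with hC₂
  have hH1 : 1 ≤ H := by linarith
  have hC₁1 : 1 ≤ C₁ := by
    have : 1 ≤ L * H ^ k₀ := one_le_mul_of_one_le_of_one_le hL (one_le_pow₀ hH1)
    rw [hC₁]; linarith
  have hC₂1 : 1 ≤ C₂ := one_le_mul_of_one_le_of_one_le hL (one_le_pow₀ hH1)
  refine ⟨A, hA, 2 * C₂ * C₁, by nlinarith, ?_⟩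
  intro U hU ξ hξ r hr hdiam
  have hF : (frontier U).Nonempty := ⟨ξ, hξ⟩
  obtain ⟨x₀, hx₀, hx₀cmp⟩ := hcmp U hU ξ hξ r hr hdiam
  refine ⟨x₀, hx₀, ?_⟩
  intro u v hup huh huc hu0 hvp hvh hvc hv0 x hx
  set W := ball ξ (A * r) with hW
  have hWo : IsOpen W := isOpen_ball
  have hV : IsOpen (U ∩ W) := hU.1.inter hWo
  have h3W : ball ξ (3 * r) ⊆ W := ball_subset_ball (by nlinarith)
  have hα := hup x₀ hx₀
  have hβ := hvp x₀ hx₀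
  have ucmp := hx₀cmp u huh (fun y hy => (hup y hy).le)
  have vcmp := hx₀cmp v hvh (fun y hy => (hvp y hy).le)
  -- Carleson estimate
  have carleson : ∀ y ∈ U ∩ ball ξ (2 * r), u y ≤ C₁ * u x₀ := by
    by_contra hcon
    push Not at hcon
    obtain ⟨y₀, hy₀, hy₀u⟩ := hcon
    have iter : ∀ j : ℕ, ∃ y ∈ U, dist y ξ < 2 * r + r * (1 - 1 / 2 ^ j) ∧
        2 * (L * H ^ (k₀ + j) * u x₀) < u y := by
      intro j
      induction j with
      | zero =>
        refine ⟨y₀, hy₀.1, by simpa using hy₀.2, ?_⟩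
        rw [hC₁] at hy₀u
        simpa [mul_assoc] using hy₀u
      | succ j ih =>
        obtain ⟨y, hy, hyξ, hyu⟩ := ih
        set M : ℝ := L * H ^ (k₀ + j) * u x₀ with hM
        have hM0 : 0 < M := by positivity
        set t : ℝ := r / 2 ^ (k₀ + j) with ht
        have ht0 : 0 < t := by positivity
        have htr : t ≤ r := div_le_self hr.le (one_le_pow₀ (by norm_num))
        have hrad : m * (7 / c * t) ≤ r * (1 / 2 ^ (j + 1)) := by
          have e1 : m * (7 / c * t) = (2 * (m * (7 / c))) * (r / (2 ^ k₀ * 2 ^ (j + 1))) := by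
            rw [ht, pow_add, pow_succ]; field_simp
          have e2 : r * (1 / 2 ^ (j + 1)) = 2 ^ k₀ * (r / (2 ^ k₀ * 2 ^ (j + 1))) := by
            field_simp
          rw [e1, e2]
          gcongr
        have ej : r * (1 - 1 / 2 ^ j) + r * (1 / 2 ^ (j + 1)) = r * (1 - 1 / 2 ^ (j + 1)) := by
          rw [pow_succ]; field_simp; ring
        have ej2 : r * (1 - 1 / 2 ^ (j + 1)) ≤ r := by
          have : (0:ℝ) < 1 / 2 ^ (j + 1) := by positivity
          nlinarith
        have hclose : ∀ p ∈ closedBall y (m * (7 / c * t)),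
            dist p ξ < 2 * r + r * (1 - 1 / 2 ^ (j + 1)) := by
          intro p hp
          rw [mem_closedBall] at hp
          linarith [dist_triangle p y ξ]
        have h3 : closedBall y (m * (7 / c * t)) ⊆ ball ξ (3 * r) := by
          intro p hp
          have := hclose p hp
          rw [mem_ball]
          linarith
        by_contra hno
        push Not at hno
        have hbig : ∀ p ∈ U ∩ closedBall y (m * (7 / c * t)), u p ≤ 2 * (H * M) := by
          intro p hp
          have := hno p hp.1 (hclose p hp.2)
          have e : 2 * (L * H ^ (k₀ + (j + 1)) * u x₀) = 2 * (H * M) := by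
            rw [hM, ← add_assoc, pow_succ]; ring
          linarith
        have hsub : SubSol U W fun p => 1 * u p + 0 * u p + (-M) := by
          refine ⟨harm_comb hV huh huh 1 0 (-M), ?_, ?_⟩
          · fun_prop
          · intro p hp
            simp only
            rw [hu0 p hp]
            linarith
        have key := hdecay U hU W hWo _ hsub t ht0 (diam_mono hc0 htr hdiam) (2 * (H * M))
          (by positivity) m y hy (h3.trans h3W)
          (fun p hp => by have := hbig p hp; linarith)
          (fun p hp hdp => by
            have := (ucmp (k₀ + j) p ⟨hp.1, h3 hp.2⟩ hdp).1
            linarith)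
        have h5 : θ ^ m * (2 * (H * M)) ≤ 1 / (2 * H) * (2 * (H * M)) := by gcongr
        have h6 : 1 / (2 * H) * (2 * (H * M)) = M := by field_simp
        linarith
    have hcomp : IsCompact (closure (U ∩ W)) :=
      (Metric.isBounded_ball.subset inter_subset_right).isCompact_closure
    obtain ⟨Bd, hBd⟩ := hcomp.exists_bound_of_continuousOn huc
    obtain ⟨j, hj⟩ := pow_unbounded_of_one_lt (Bd / u x₀) (show 1 < H by linarith)
    obtain ⟨y, hy, hyξ, hyu⟩ := iter j
    have hyW : y ∈ W := h3W (by
      rw [mem_ball]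
      have : (0:ℝ) < 1 / 2 ^ j := by positivity
      nlinarith)
    have h1 := hBd y (subset_closure ⟨hy, hyW⟩)
    have h2 := le_trans (le_abs_self (u y)) h1
    rw [div_lt_iff₀ hα] at hj
    have h3 : H ^ j ≤ L * H ^ (k₀ + j) := by
      have h4 : H ^ j ≤ H ^ (k₀ + j) := pow_le_pow_right₀ hH1 (by omega)
      have h5 : H ^ (k₀ + j) ≤ L * H ^ (k₀ + j) := le_mul_of_one_le_left (by positivity) hL
      linarith
    have h4 : H ^ j * u x₀ ≤ L * H ^ (k₀ + j) * u x₀ := by gcongr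
    have h5 : 0 < H ^ j * u x₀ := by positivity
    linarith
  -- lower bound for v
  have vlow : ∀ y ∈ U ∩ ball ξ (2 * r), δ * r ≤ infDist y (frontier U) → v x₀ ≤ C₂ * v y := by
    intro y hy hdy
    refine (vcmp k₁ y ⟨hy.1, ball_subset_ball (by linarith) hy.2⟩ ?_).2
    have e : r / 2 ^ k₁ = (1 / 2) ^ k₁ * r := by rw [one_div, inv_pow]; field_simp
    rw [e]
    have : (1 / 2) ^ k₁ * r ≤ δ * r := by gcongr
    linarith
  have hxr := hx.2
  rw [mem_ball] at hxr
  have hcb : closedBall x r ⊆ ball ξ (2 * r) := by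
    intro p hp
    rw [mem_closedBall] at hp
    rw [mem_ball]
    linarith [dist_triangle p x ξ]
  have h2W : ball ξ (2 * r) ⊆ W := (ball_subset_ball (by linarith)).trans h3W
  have hC₁0 : 0 < C₁ := by linarith
  have hC₂0 : 0 < C₂ := by linarith
  have hub : ∀ y ∈ U ∩ closedBall x r, -(1 / (C₁ * u x₀)) * u y ≥ -1 := by
    intro y hy
    have h1 := carleson y ⟨hy.1, hcb hy.2⟩
    have h2 : 1 / (C₁ * u x₀) * u y ≤ 1 := by
      rw [one_div, inv_mul_le_iff₀ (by positivity)]; linarith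
    linarith
  have key := hposl U hU hF W hWo
    (fun y => (2 * C₂ / v x₀) * v y + (-(1 / (C₁ * u x₀))) * u y + 0)
    (harm_comb hV hvh huh _ _ _) (by fun_prop)
    (fun y hy => by rw [hu0 y hy, hv0 y hy]; simp)
    x hx.1 r hr hdiam (hcb.trans h2W) 1 one_pos
    (fun y hy => by
      have h1 := hub y hy
      have h2 : 0 < v y := hvp y ⟨hy.1, h2W (hcb hy.2)⟩
      have h3 : 0 < (2 * C₂ / v x₀) * v y := by positivity
      linarith)
    (fun y hy hdy => by
      have h1 := hub y hy
      have h2 := vlow y ⟨hy.1, hcb hy.2⟩ hdy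
      have h3 : 2 ≤ (2 * C₂ / v x₀) * v y := by
        rw [div_mul_eq_mul_div, le_div_iff₀ hβ]; linarith
      linarith)
  have h1 : 1 / (C₁ * u x₀) * u x < (2 * C₂ / v x₀) * v x := by linarith
  rw [one_div, inv_mul_eq_div, div_mul_eq_mul_div, div_lt_div_iff₀ (by positivity) hβ] at h1
  have e : 2 * C₂ * v x * (C₁ * u x₀) = 2 * C₂ * C₁ * (v x * u x₀) := by ring
  linarith

/-- Boundary Harnack principle for harmonic functions vanishing on the boundary
of a `(c_u,C_u)`-uniform domain in `ℝⁿ`. -/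
theorem statement0 (n : ℕ) (hn : 1 ≤ n) (cu Cu : ℝ)
    (hcu : cu ∈ Set.Ioo (0:ℝ) 1) (hCu : 1 < Cu) :
    ∃ a₀ ∈ Set.Ioo (0:ℝ) 1, ∃ A₀ : ℝ, 1 < A₀ ∧ ∃ A₁ : ℝ, 1 < A₁ ∧
      ∀ U : Set (En n), U ≠ Set.univ → IsUniformDomain cu Cu U →
      ∀ ξ ∈ frontier U, ∀ r : ℝ, 0 < r →
        ENNReal.ofReal r < ENNReal.ofReal a₀ * EMetric.diam U →
        ∀ u v : En n → ℝ,
          (∀ z ∈ U ∩ Metric.ball ξ (A₀ * r), 0 < u z) →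
          IsHarmonicOn u (U ∩ Metric.ball ξ (A₀ * r)) →
          ContinuousOn u (closure (U ∩ Metric.ball ξ (A₀ * r))) →
          (∀ z ∈ frontier U ∩ Metric.ball ξ (A₀ * r), u z = 0) →
          (∀ z ∈ U ∩ Metric.ball ξ (A₀ * r), 0 < v z) →
          IsHarmonicOn v (U ∩ Metric.ball ξ (A₀ * r)) →
          ContinuousOn v (closure (U ∩ Metric.ball ξ (A₀ * r))) →
          (∀ z ∈ frontier U ∩ Metric.ball ξ (A₀ * r), v z = 0) →
          ∀ x ∈ U ∩ Metric.ball ξ r, ∀ x' ∈ U ∩ Metric.ball ξ r,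
            u x * v x' ≤ A₁ * (u x' * v x) := by
  obtain ⟨A, hA, B, hB, h⟩ := onesided hn hcu hCu
  have hc0 := hcu.1
  have hc1 := hcu.2
  refine ⟨cu / 8, ⟨by linarith, by linarith⟩, A, by linarith, B * B, by nlinarith, ?_⟩
  intro U _ hU ξ hξ r hr hdiam u v hup huh huc hu0 hvp hvh hvc hv0 x hx x' hx'
  have hdiam2 : ENNReal.ofReal (8 * r / cu) < Metric.ediam U := by
    by_contra hcon
    have hle : Metric.ediam U ≤ ENNReal.ofReal (8 * r / cu) := not_lt.mp hcon
    have h3 : ENNReal.ofReal (cu / 8) * Metric.ediam U ≤ ENNReal.ofReal r := by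
      calc ENNReal.ofReal (cu / 8) * Metric.ediam U
          ≤ ENNReal.ofReal (cu / 8) * ENNReal.ofReal (8 * r / cu) := by gcongr
        _ = ENNReal.ofReal r := by
          rw [← ENNReal.ofReal_mul (by positivity)]
          congr 1
          field_simp
    exact absurd (lt_of_lt_of_le hdiam h3) (lt_irrefl _)
  obtain ⟨x₀, hx₀, h'⟩ := h U hU ξ hξ r hr hdiam2
  have h1 := h' u v hup huh huc hu0 hvp hvh hvc hv0 x hx
  have h2 := h' v u hvp hvh hvc hv0 hup huh huc hu0 x' hx'
  have hsubs : ball ξ r ⊆ ball ξ (A * r) := ball_subset_ball (by nlinarith)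
  have p1 := hup x ⟨hx.1, hsubs hx.2⟩
  have p2 := hvp x ⟨hx.1, hsubs hx.2⟩
  have p3 := hup x' ⟨hx'.1, hsubs hx'.2⟩
  have p4 := hvp x' ⟨hx'.1, hsubs hx'.2⟩
  have p5 := hup x₀ hx₀
  have p6 := hvp x₀ hx₀
  have hm := mul_le_mul h1 h2 (by positivity) (by positivity)
  have hp : 0 < u x₀ * v x₀ := by positivity
  refine le_of_mul_le_mul_right ?_ hp
  calc u x * v x' * (u x₀ * v x₀) = u x * v x₀ * (v x' * u x₀) := by ring
    _ ≤ _ := hm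
    _ = _ := by ring
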